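/- arXiv:1010.5987 — 2 statements merged into one kernel-verified Lean document; each statement's English description precedes it below -/
import Mathlib

section
/- Suppose G and H are non-archimedean topological groups and H is a G-group, i.e., G acts continuously on H by group automorphisms. Then the topological semidirect product H ⋊ G (with the product topology) is non-archimedean. -/
/-!
Continuity of the action at `(1, 1)` says that for an open subgroup `A` of `H` there are open
subgroups `B` of `G` and `A'` of `H` with `φ B A' ⊆ A`. The elements of `H` whose whole `B`-orbit
stays in `A` form a `B`-invariant subgroup `N ≤ A`, which is open because it contains `A'`. For any
open subgroup `C` of `G` the set `N × (B ⊓ C)` is then an open subgroup of `H ⋊ G` inside `A × C`,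
and the sets `A × C` are a neighborhood base at `1`.
-/

open Topology

variable {H G : Type*} [Group H] [TopologicalSpace H] [Group G] [TopologicalSpace G]
  (φ : G →* MulAut H)

/-- The topological semidirect product: `H ⋊[φ] G` with the product topology. -/
instance SemidirectProduct.topologicalSpace : TopologicalSpace (H ⋊[φ] G) :=
  TopologicalSpace.induced (fun u : H ⋊[φ] G => (u.left, u.right)) inferInstance

/-- Every open subgroup `A` of `H` contains an open subgroup invariant under some open subgroup
of `G`. -/
theorem exists_invariant_openSubgroup [NonarchimedeanGroup H] [NonarchimedeanGroup G]
    (hcont : Continuous fun p : G × H => φ p.1 p.2) (A : OpenSubgroup H) :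
    ∃ (N : OpenSubgroup H) (B : OpenSubgroup G), N ≤ A ∧ ∀ g ∈ B, ∀ h ∈ N, φ g h ∈ N := by
  have hU : (fun p : G × H => φ p.1 p.2) ⁻¹' (A : Set H) ∈ 𝓝 (1 : G × H) :=
    (A.isOpen.preimage hcont).mem_nhds (by simp [one_mem])
  obtain ⟨B, A', hBA⟩ := NonarchimedeanGroup.prod_subset hU
  let N : Subgroup H :=
    { carrier := {h | ∀ g ∈ B, φ g h ∈ A}
      one_mem' := fun g _ => by simp [one_mem]
      mul_mem' := fun ha hb g hg => by rw [map_mul]; exact mul_mem (ha g hg) (hb g hg)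
      inv_mem' := fun ha g hg => by rw [map_inv]; exact inv_mem (ha g hg) }
  have hN : IsOpen (N : Set H) :=
    Subgroup.isOpen_mono (H₁ := (A' : Subgroup H))
      (fun h hh g hg => hBA (Set.mk_mem_prod hg hh)) A'.isOpen
  refine ⟨⟨N, hN⟩, B, fun h hh => ?_, fun g hg h hh k hk => ?_⟩
  · simpa using hh 1 (one_mem B)
  · have := hh (k * g) (mul_mem hk hg)
    rwa [map_mul, MulAut.mul_apply] at this

/-- If `G` and `H` are non-archimedean topological groups and `H` is a `G`-group
(i.e. `G` acts continuously on `H` by group automorphisms), then the topological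
semidirect product `H ⋊ G` is non-archimedean. -/
theorem nonarchimedean_semidirectProduct
    [NonarchimedeanGroup H] [NonarchimedeanGroup G]
    (hcont : Continuous fun p : G × H => φ p.1 p.2) :
    ∀ U ∈ 𝓝 (1 : H ⋊[φ] G), ∃ V : OpenSubgroup (H ⋊[φ] G), (V : Set (H ⋊[φ] G)) ⊆ U := by
  intro U hU
  rw [nhds_induced] at hU
  obtain ⟨W, hW, hWU⟩ := hU
  obtain ⟨A, C, hAC⟩ := NonarchimedeanGroup.prod_subset (G := H) (K := G) hW
  obtain ⟨N, B, hNA, hinv⟩ := exists_invariant_openSubgroup φ hcont A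
  let V : Subgroup (H ⋊[φ] G) :=
    { carrier := {u | u.left ∈ N ∧ u.right ∈ B ⊓ C}
      one_mem' := ⟨one_mem N, one_mem (B ⊓ C)⟩
      mul_mem' := fun ha hb =>
        ⟨mul_mem ha.1 (hinv _ ha.2.1 _ hb.1), mul_mem ha.2 hb.2⟩
      inv_mem' := fun ha =>
        ⟨hinv _ (inv_mem ha.2.1) _ (inv_mem ha.1), inv_mem ha.2⟩ }
  have hV : IsOpen (V : Set (H ⋊[φ] G)) :=
    (N.isOpen.prod (B ⊓ C).isOpen).preimage continuous_induced_dom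
  exact ⟨⟨V, hV⟩, fun u hu => hWU (hAC ⟨hNA hu.1, hu.2.2⟩)⟩
end

section
/- Every ultra-metric space (X,d) is isometric to a closed subset of a Boolean group equipped with an ultra-norm: there exist a Boolean group E with an ultra-norm ‖·‖ and a map α : X → E with ‖α(x) − α(y)‖ = d(x,y) for all x,y ∈ X whose image α(X) is closed in the ultra-norm topology of E. -/
/-!
The group is the group of finite subsets of `X` of even size under symmetric difference, seen inside
`X →₀ ZMod 2` as the subgroup generated by the pairs `x + y`. Let `K r` be the subgroup generated by
the pairs with `dist x y ≤ r`; these subgroups increase with `r`, so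
`‖f‖ = inf {r ≥ 0 | f ∈ K r}` satisfies the strong triangle inequality.

Lower bounds come from `apply_eq_zero_of_mem`: by the ultrametric inequality, summing coefficients
over a closed ball of radius `r` is a homomorphism that kills `K r`. So if `f ∈ K r` and `x` is the
only point of the support of `f` in its `r`-ball, then `f x = 0`. As finite sets have a positive
separation, this makes `‖·‖` a norm, and it makes `x ↦ x + x₀` an isometry. For closedness, let `f`
be a limit of points `x + x₀`, and put `g = f + x₀`. For `r` below the separation of the
support of `g`, some `x` has `g - x ∈ K r`; then every point of the support of `g` lies in the
`r`-ball of `x`, so there is at most one, and there is at least one because `x ∉ K r`. Hence `g` is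
a single point.
-/

universe u

/-- A bundled Boolean group equipped with an ultra-norm, carrying the metric (and hence
the topology) induced by the ultra-norm. -/
structure UltraNormedBoolGroupB : Type (u + 1) where
  E : Type u
  [grp : AddCommGroup E]
  boolean : ∀ u : E, u + u = 0
  norm : E → ℝ
  norm_eq_zero_iff : ∀ u : E, norm u = 0 ↔ u = 0
  norm_neg : ∀ u : E, norm (-u) = norm u
  norm_add_le_max : ∀ u v : E, norm (u + v) ≤ max (norm u) (norm v)
  [met : MetricSpace E]
  dist_eq : ∀ u v : E, dist u v = norm (u - v)

attribute [instance] UltraNormedBoolGroupB.grp UltraNormedBoolGroupB.met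

namespace UltraBool

open Finsupp Filter Topology

variable {X : Type u}

/-- The subgroup generated by the pairs `x + y` of points at distance at most `r`. -/
noncomputable def K (X : Type u) [MetricSpace X] (r : ℝ) : AddSubgroup (X →₀ ZMod 2) :=
  AddSubgroup.closure {f | ∃ x y : X, dist x y ≤ r ∧ f = single x 1 + single y 1}

/-- The subgroup generated by all pairs `x + y`, i.e. the finite subsets of even size. -/
noncomputable def H (X : Type u) : AddSubgroup (X →₀ ZMod 2) :=
  AddSubgroup.closure {f | ∃ x y : X, f = single x 1 + single y 1}

lemma add_self_eq_zero (f : X →₀ ZMod 2) : f + f = 0 := by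
  ext x
  exact CharTwo.add_self_eq_zero (f x)

variable [MetricSpace X]

lemma K_mono {r s : ℝ} (h : r ≤ s) : K X r ≤ K X s := by
  apply AddSubgroup.closure_mono
  rintro f ⟨x, y, hxy, rfl⟩
  exact ⟨x, y, hxy.trans h, rfl⟩

lemma exists_mem_K {f : X →₀ ZMod 2} (hf : f ∈ H X) : ∃ r, 0 ≤ r ∧ f ∈ K X r := by
  induction hf using AddSubgroup.closure_induction with
  | mem f h =>
    obtain ⟨x, y, rfl⟩ := h
    exact ⟨dist x y, dist_nonneg, AddSubgroup.subset_closure ⟨x, y, le_rfl, rfl⟩⟩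
  | zero => exact ⟨0, le_rfl, zero_mem _⟩
  | add f g _ _ hf hg =>
    obtain ⟨r, hr, hf⟩ := hf
    obtain ⟨s, hs, hg⟩ := hg
    exact ⟨max r s, hr.trans (le_max_left _ _),
      add_mem (K_mono (le_max_left _ _) hf) (K_mono (le_max_right _ _) hg)⟩
  | neg f _ hf =>
    obtain ⟨r, hr, hf⟩ := hf
    exact ⟨r, hr, neg_mem hf⟩

open Classical in
/-- The sum of the coefficients over the closed ball of radius `r` around `x` vanishes on `K r`;
when `x` is the only point of the support in that ball, this sum is `f x`. -/
lemma apply_eq_zero_of_mem (hultra : ∀ x y z : X, dist x z ≤ max (dist x y) (dist y z))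
    {r : ℝ} (hr : 0 ≤ r) {f : X →₀ ZMod 2} (hf : f ∈ K X r) (x : X)
    (hx : ∀ y, f y ≠ 0 → dist x y ≤ r → y = x) : f x = 0 := by
  let φ : (X →₀ ZMod 2) →ₗ[ZMod 2] ZMod 2 :=
    linearCombination (ZMod 2) fun y => if dist x y ≤ r then (1 : ZMod 2) else 0
  have hK : K X r ≤ φ.toAddMonoidHom.ker := by
    rw [K, AddSubgroup.closure_le]
    rintro _ ⟨y, z, hyz, rfl⟩
    have hiff : dist x y ≤ r ↔ dist x z ≤ r :=
      ⟨fun h => (hultra x y z).trans (max_le h hyz),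
        fun h => (hultra x z y).trans (max_le h (by rwa [dist_comm]))⟩
    change φ (single y 1 + single z 1) = 0
    simp only [φ, map_add, linearCombination_single, hiff, smul_eq_mul, one_mul]
    exact CharTwo.add_self_eq_zero _
  have h0 : φ f = 0 := hK hf
  have h1 : φ f = f x := by
    simp only [φ, linearCombination_apply, Finsupp.sum, smul_eq_mul]
    rw [Finset.sum_eq_single x]
    · simp [hr]
    · intro y hy hne
      rw [if_neg fun h => hne (hx y (mem_support_iff.1 hy) h), mul_zero]
    · intro h
      rw [notMem_support_iff.1 h, zero_mul]
  rw [← h1, h0]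

lemma exists_separation (s : Finset X) :
    ∃ ε : ℝ, 0 < ε ∧ ∀ x ∈ s, ∀ y ∈ s, dist x y ≤ ε → x = y := by
  classical
  have h : ∀ᶠ ε in 𝓝[>] (0 : ℝ), ∀ p ∈ s.offDiag, ε < dist p.1 p.2 := by
    rw [Filter.eventually_all_finset]
    intro p hp
    exact nhdsWithin_le_nhds (eventually_lt_nhds (dist_pos.2 (Finset.mem_offDiag.1 hp).2.2))
  obtain ⟨ε, hε, hpos⟩ := (h.and self_mem_nhdsWithin).exists
  refine ⟨ε, hpos, fun x hx y hy hxy => ?_⟩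
  by_contra hne
  exact absurd (hε (x, y) (Finset.mem_offDiag.2 ⟨hx, hy, hne⟩)) (not_lt.2 hxy)

/-- The ultra-norm `‖f‖ = inf {r ≥ 0 | f ∈ K r}`, meaningful on `H X`, where the set is nonempty. -/
noncomputable def nrm (f : X →₀ ZMod 2) : ℝ := sInf {r | 0 ≤ r ∧ f ∈ K X r}

lemma nrm_nonneg (f : X →₀ ZMod 2) : 0 ≤ nrm f := Real.sInf_nonneg fun _ h => h.1

lemma nrm_le {f : X →₀ ZMod 2} {r : ℝ} (hr : 0 ≤ r) (h : f ∈ K X r) : nrm f ≤ r :=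
  csInf_le ⟨0, fun _ h => h.1⟩ ⟨hr, h⟩

lemma mem_of_nrm_lt {f : X →₀ ZMod 2} (hf : f ∈ H X) {r : ℝ} (h : nrm f < r) : f ∈ K X r := by
  obtain ⟨s, hs, hsr⟩ := exists_lt_of_csInf_lt (exists_mem_K hf) h
  exact K_mono hsr.le hs.2

lemma nrm_zero : nrm (0 : X →₀ ZMod 2) = 0 :=
  le_antisymm (nrm_le le_rfl (zero_mem _)) (nrm_nonneg _)

lemma nrm_neg (f : X →₀ ZMod 2) : nrm (-f) = nrm f := by
  simp only [nrm, neg_mem_iff]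

lemma nrm_add_le {f g : X →₀ ZMod 2} (hf : f ∈ H X) (hg : g ∈ H X) :
    nrm (f + g) ≤ max (nrm f) (nrm g) := by
  refine le_of_forall_gt_imp_ge_of_dense fun r hr => ?_
  obtain ⟨h1, h2⟩ := max_lt_iff.1 hr
  exact nrm_le ((nrm_nonneg f).trans h1.le) (add_mem (mem_of_nrm_lt hf h1) (mem_of_nrm_lt hg h2))

lemma eq_zero_of_nrm (hultra : ∀ x y z : X, dist x z ≤ max (dist x y) (dist y z))
    {f : X →₀ ZMod 2} (hf : f ∈ H X) (h : nrm f = 0) : f = 0 := by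
  obtain ⟨ε, hε, hsep⟩ := exists_separation f.support
  ext x
  by_contra hx
  refine hx (apply_eq_zero_of_mem hultra hε.le (mem_of_nrm_lt hf (h.trans_lt hε)) x ?_)
  intro y hy hxy
  exact (hsep x (mem_support_iff.2 hx) y (mem_support_iff.2 hy) hxy).symm

lemma nrm_pair (hultra : ∀ x y z : X, dist x z ≤ max (dist x y) (dist y z)) (x y : X) :
    nrm (single x 1 + single y 1 : X →₀ ZMod 2) = dist x y := by
  apply le_antisymm
  · exact nrm_le dist_nonneg (AddSubgroup.subset_closure ⟨x, y, le_rfl, rfl⟩)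
  · by_contra! h
    obtain ⟨r, h1, h2⟩ := exists_between h
    have hr : 0 ≤ r := (nrm_nonneg _).trans h1.le
    have hxy : y ≠ x := by
      rintro rfl
      rw [dist_self] at h2
      exact absurd hr (not_le.2 h2)
    have := apply_eq_zero_of_mem hultra hr
      (mem_of_nrm_lt (AddSubgroup.subset_closure ⟨x, y, rfl⟩) h1) x (by
        intro z hz hxz
        by_contra hne
        have hzy : z ≠ y := by
          rintro rfl
          exact absurd hxz (not_le.2 h2)
        simp [Ne.symm hne, Ne.symm hzy] at hz)
    simp [hxy] at this

/-- An element approximated arbitrarily well by single points is a single point. -/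
lemma eq_single_of_approx (hultra : ∀ x y z : X, dist x z ≤ max (dist x y) (dist y z))
    (g : X →₀ ZMod 2) (h : ∀ ε : ℝ, 0 < ε → ∃ x : X, g - single x 1 ∈ K X ε) :
    ∃ z, g = single z 1 := by
  obtain ⟨ε, hε, hsep⟩ := exists_separation g.support
  obtain ⟨x, hx⟩ := h ε hε
  have hnear : ∀ z, g z ≠ 0 → dist z x ≤ ε := by
    intro z hz
    by_contra hzx
    have hne : x ≠ z := by
      rintro rfl
      exact hzx (by simpa using hε.le)
    have := apply_eq_zero_of_mem hultra hε.le hx z (by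
      intro y hy hzy
      have hyx : x ≠ y := by
        rintro rfl
        exact hzx hzy
      have hgy : g y ≠ 0 := by simpa [single_apply, hyx] using hy
      exact (hsep z (mem_support_iff.2 hz) y (mem_support_iff.2 hgy) hzy).symm)
    exact hz (by simpa [single_apply, hne] using this)
  have hg : g ≠ 0 := by
    rintro rfl
    have := apply_eq_zero_of_mem hultra hε.le hx x (by
      intro y hy _
      by_contra hne
      simp [Ne.symm hne] at hy)
    simp at this
  obtain ⟨z, hz⟩ := Finsupp.ne_iff.1 hg
  rw [coe_zero, Pi.zero_apply] at hz
  refine ⟨z, ?_⟩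
  ext y
  by_cases hzy : z = y
  · subst hzy
    rw [single_eq_same]
    exact Fin.eq_one_of_ne_zero _ hz
  · rw [single_eq_of_ne' hzy]
    by_contra hy
    refine hzy (hsep z (mem_support_iff.2 hz) y (mem_support_iff.2 hy) ?_)
    exact (hultra z x y).trans (max_le (hnear z hz) (by rw [dist_comm]; exact hnear y hy))

/-- The metric `‖u - v‖` on the group of finite even subsets. -/
noncomputable abbrev metric (hultra : ∀ x y z : X, dist x z ≤ max (dist x y) (dist y z)) :
    MetricSpace (H X) where
  dist u v := nrm (u - v : X →₀ ZMod 2)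
  dist_self u := by rw [sub_self, nrm_zero]
  dist_comm u v := by rw [← nrm_neg, neg_sub]
  dist_triangle u v w := by
    have h := nrm_add_le (sub_mem u.2 v.2) (sub_mem v.2 w.2)
    rw [sub_add_sub_cancel] at h
    exact h.trans (max_le_add_of_nonneg (nrm_nonneg _) (nrm_nonneg _))
  eq_of_dist_eq_zero {u v} h :=
    Subtype.ext (sub_eq_zero.1 (eq_zero_of_nrm hultra (sub_mem u.2 v.2) h))

/-- The ultra-normed Boolean group of finite even subsets of `X`. -/
noncomputable def W (hultra : ∀ x y z : X, dist x z ≤ max (dist x y) (dist y z)) :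
    UltraNormedBoolGroupB.{u} where
  E := H X
  boolean u := Subtype.ext (add_self_eq_zero u.1)
  norm u := nrm u.1
  norm_eq_zero_iff u :=
    ⟨fun h => Subtype.ext (eq_zero_of_nrm hultra u.2 h), by rintro rfl; exact nrm_zero⟩
  norm_neg u := nrm_neg u.1
  norm_add_le_max u v := nrm_add_le u.2 v.2
  met := metric hultra
  dist_eq _ _ := rfl

end UltraBool

open UltraBool Finsupp in
/-- Every ultra-metric space is isometric to a closed subset of a Boolean group equipped
with an ultra-norm. -/
theorem ultrametric_isometric_closed_subset_of_ultranormed_boolean_group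
    (X : Type u) [MetricSpace X]
    (hultra : ∀ x y z : X, dist x z ≤ max (dist x y) (dist y z)) :
    ∃ (W : UltraNormedBoolGroupB.{u}) (α : X → W.E),
      (∀ x y : X, dist (α x) (α y) = dist x y) ∧ IsClosed (Set.range α) := by
  refine ⟨W hultra, ?_⟩
  rcases isEmpty_or_nonempty X with hX | ⟨⟨x₀⟩⟩
  · exact ⟨isEmptyElim, isEmptyElim, by rw [Set.range_eq_empty]; exact isClosed_empty⟩
  refine ⟨fun x => ⟨single x 1 + single x₀ 1, AddSubgroup.subset_closure ⟨x, x₀, rfl⟩⟩, ?_, ?_⟩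
  · intro x y
    change nrm ((single x 1 + single x₀ 1) - (single y 1 + single x₀ 1) : X →₀ ZMod 2) = _
    rw [add_sub_add_right_eq_sub, sub_eq_add_neg,
      neg_eq_of_add_eq_zero_left (add_self_eq_zero (single y 1)), nrm_pair hultra]
  · refine isClosed_of_closure_subset fun f hf => ?_
    rw [Metric.mem_closure_iff] at hf
    obtain ⟨z, hz⟩ := eq_single_of_approx hultra (f.1 - single x₀ 1) fun ε hε => by
      obtain ⟨_, ⟨x, rfl⟩, hx⟩ := hf ε hε
      refine ⟨x, ?_⟩
      have := mem_of_nrm_lt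
        (sub_mem f.2 (AddSubgroup.subset_closure ⟨x, x₀, rfl⟩)) hx
      rwa [sub_sub, add_comm (single x₀ 1)]
    exact ⟨z, Subtype.ext (sub_eq_iff_eq_add.1 hz).symm⟩
end
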